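/- Let p be a prime with p ≠ 2 and p ≠ 5, let a and n be positive integers with a even, let s = n mod z(p), and let A = ⌊n(p^a − 1)/(p^{ν_p(n)}·z(p))⌋. If p ≡ ±2 (mod 5), then ν_p( C(p^a n, n)_F ) = A/(p−1) − (a/2)·[s ≠ 0] − ν_p(A!) = s_p(A)/(p−1) − (a/2)·[s ≠ 0]. -/

import Mathlib

/-- The Fibonomial coefficient `C(m,k)_F = (F_{m-k+1} ⋯ F_m)/(F_1 ⋯ F_k)`,
with `C(m,0)_F = 1` and `C(m,k)_F = 0` for `k > m`. -/
def fibBinom (m k : ℕ) : ℕ :=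
  (∏ i ∈ Finset.range k, Nat.fib (m - i)) / ∏ i ∈ Finset.range k, Nat.fib (i + 1)

/-- The rank of appearance `z(n)`: the least positive `m` with `n ∣ F_m`. -/
noncomputable def fibRank (n : ℕ) : ℕ := sInf {m : ℕ | 0 < m ∧ n ∣ Nat.fib m}

/-- The sum of the digits of `n` in base `q`. -/
def digitSum (q n : ℕ) : ℕ := (Nat.digits q n).sum

/-!
Write `z` for the rank of appearance of `p` and `e = ν_p(F_z)`. The argument has three ingredients.

* Lifting the exponent: `ν_p(F_{zk}) = e + ν_p(k)`, while `p ∤ F_m` if `z ∤ m`. This gives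
  `ν_p(F_1 ⋯ F_k) = e ⌊k/z⌋ + ν_p(⌊k/z⌋!)` (`padicValNat_fibFact`).
* For `p ≡ ±2 (mod 5)`, `5` is a non-residue mod `p`, hence `φ^(p+1) = -1` for the golden ratio `φ`
  in characteristic `p`, so `p ∣ F_{p+1}` and `z ∣ p + 1` (`prime_dvd_fib_succ`). Write
  `p + 1 = z d`. For even `a = 2b` the number `p^a - 1` is therefore divisible by `z`, and
  `(p^a - 1)/z = d (p - 1) G` with `G = 1 + p² + ⋯ + p^(2(b-1))`.
* Legendre's formula `(p - 1) ν_p(N!) = N - s_p(N)`.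

Put `q = ⌊n/z⌋`, `s = n mod z` and `B = n(p^a - 1)/z`, an exact quotient equal to `p^{ν_p(n)} A`.
As `p^a n - n = zB`, the multiples of `e` cancel and
`ν_p(C(p^a n, n)_F) = ν_p((B + q)!) - ν_p(B!) - ν_p(q!)`,
which by Legendre is `(s_p(A) + s_p(q) - s_p(B + q))/(p - 1)`. Finally
`B + q = p^a q + s d (p - 1) G` with `s d (p - 1) G < p^a`, so no carries occur; if `s ≠ 0` then
`1 ≤ s d ≤ p`, and each of the `b` two-digit blocks `s d (p - 1) = (s d - 1) p + (p - s d)` has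
digit sum `p - 1` (`digitSum_geomSq`). This produces the correction `(a/2)[s ≠ 0]`.
-/

/-! ### Lifting the exponent for Fibonacci numbers -/

/-- Binomial expansion of `F_{mk}` and `F_{mk+1}` modulo `F_m³`, with `m = t + 1` and
`k = j + 2`. If `M² = M + 1`, then `(F_{m-1} + F_m M)^k = M^{mk}`, in which `F_{mk}` is the
coefficient of `M` and `F_{mk+1}` the sum of the two coefficients. -/
theorem fib_mul_expansion (t j : ℕ) : ∃ u v : ℕ,
    Nat.fib ((t + 1) * (j + 2)) = (j + 2) * Nat.fib t ^ (j + 1) * Nat.fib (t + 1)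
      + (j + 2).choose 2 * Nat.fib t ^ j * Nat.fib (t + 1) ^ 2 + u * Nat.fib (t + 1) ^ 3 ∧
    Nat.fib ((t + 1) * (j + 2) + 1) = Nat.fib t ^ (j + 2)
      + (j + 2) * Nat.fib t ^ (j + 1) * Nat.fib (t + 1)
      + 2 * (j + 2).choose 2 * Nat.fib t ^ j * Nat.fib (t + 1) ^ 2
      + v * Nat.fib (t + 1) ^ 3 := by
  have step (k : ℕ) : Nat.fib ((t + 1) * (k + 1)) =
        Nat.fib ((t + 1) * k) * Nat.fib t + Nat.fib ((t + 1) * k + 1) * Nat.fib (t + 1) ∧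
      Nat.fib ((t + 1) * (k + 1) + 1) = Nat.fib ((t + 1) * k) * Nat.fib (t + 1) +
        Nat.fib ((t + 1) * k + 1) * (Nat.fib t + Nat.fib (t + 1)) := by
    refine ⟨Nat.fib_add _ t, ?_⟩
    rw [← Nat.fib_add_two]
    exact Nat.fib_add _ (t + 1)
  induction j with
  | zero =>
    have h0 := step 0
    have h1 := step 1
    simp only [Nat.mul_zero, Nat.fib_zero, zero_add, Nat.fib_one] at h0
    refine ⟨0, 0, ?_, ?_⟩
    · rw [h1.1, h0.1, h0.2]; norm_num; ring
    · rw [h1.2, h0.1, h0.2]; norm_num; ring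
  | succ j ih =>
    obtain ⟨u, v, h1, h2⟩ := ih
    have hc : (j + 1 + 2).choose 2 = (j + 2) + (j + 2).choose 2 := by
      rw [show j + 1 + 2 = (j + 2) + 1 from rfl, Nat.choose_succ_succ' (j + 2) 1,
        Nat.choose_one_right]
    have h := step (j + 2)
    rw [show j + 1 + 2 = j + 2 + 1 from rfl] at hc ⊢
    rw [h.1, h.2, hc, h1, h2]
    generalize (j + 2).choose 2 = c
    refine ⟨u * Nat.fib t + 2 * c * Nat.fib t ^ j + v * Nat.fib (t + 1),
      u * Nat.fib (t + 1) + c * Nat.fib t ^ j + v * (Nat.fib t + Nat.fib (t + 1))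
       + 2 * c * Nat.fib t ^ j, ?_, ?_⟩
    · ring
    · ring

theorem prime_not_dvd_fib_pred {p t : ℕ} (hp : p.Prime) (h : p ∣ Nat.fib (t + 1)) :
    ¬ p ∣ Nat.fib t := fun h' =>
  hp.one_lt.ne' (Nat.dvd_one.1 ((Nat.fib_coprime_fib_succ t) ▸ Nat.dvd_gcd h' h))

/-- Exactness of the gain uses `p ∣ (p choose 2)`, which is where `p ≠ 2` is needed. -/
theorem padicValNat_fib_mul_prime {p m : ℕ} (hp : p.Prime) (hp2 : p ≠ 2) (hm : 0 < m)
    (h : p ∣ Nat.fib m) : padicValNat p (Nat.fib (m * p)) = padicValNat p (Nat.fib m) + 1 := by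
  have := Fact.mk hp
  obtain ⟨t, rfl⟩ : ∃ t, m = t + 1 := ⟨m - 1, by omega⟩
  obtain ⟨j, hj⟩ : ∃ j, p = j + 2 := ⟨p - 2, by have := hp.two_le; omega⟩
  obtain ⟨u, -, hu, -⟩ := fib_mul_expansion t j
  have hy := prime_not_dvd_fib_pred hp h
  obtain ⟨c, hc⟩ := hp.dvd_choose_self two_ne_zero (lt_of_le_of_ne hp.two_le hp2.symm)
  have hx0 : Nat.fib (t + 1) ≠ 0 := by simp
  obtain ⟨x, hx⟩ := h
  rw [← hj, hc] at hu
  have key : Nat.fib ((t + 1) * p) = Nat.fib (t + 1) *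
      (p * (Nat.fib t ^ (j + 1) + p * (c * Nat.fib t ^ j * x + u * x ^ 2))) := by
    rw [hu]
    generalize hX : Nat.fib (t + 1) = X at *
    subst hx
    ring
  have hw : ¬ p ∣ Nat.fib t ^ (j + 1) + p * (c * Nat.fib t ^ j * x + u * x ^ 2) := by
    rw [← Nat.dvd_add_iff_left (dvd_mul_right _ _)]
    exact fun h => hy (hp.dvd_of_dvd_pow h)
  have hw0 : Nat.fib t ^ (j + 1) + p * (c * Nat.fib t ^ j * x + u * x ^ 2) ≠ 0 := by
    intro h0; exact hw (h0 ▸ dvd_zero p)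
  rw [key, padicValNat.mul hx0 (mul_ne_zero hp.ne_zero hw0), padicValNat.mul hp.ne_zero hw0,
    padicValNat.self hp.one_lt, padicValNat.eq_zero_of_not_dvd hw]

theorem padicValNat_fib_mul_of_not_dvd {p m k : ℕ} (hp : p.Prime) (hm : 0 < m)
    (h : p ∣ Nat.fib m) (hk : ¬ p ∣ k) :
    padicValNat p (Nat.fib (m * k)) = padicValNat p (Nat.fib m) := by
  have := Fact.mk hp
  obtain ⟨t, rfl⟩ : ∃ t, m = t + 1 := ⟨m - 1, by omega⟩
  obtain rfl | rfl | ⟨j, rfl⟩ : k = 0 ∨ k = 1 ∨ ∃ j, k = j + 2 := by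
    rcases k with _ | _ | j
    · exact Or.inl rfl
    · exact Or.inr (Or.inl rfl)
    · exact Or.inr (Or.inr ⟨j, rfl⟩)
  · simp at hk
  · rw [mul_one]
  obtain ⟨u, -, hu, -⟩ := fib_mul_expansion t j
  have hy := prime_not_dvd_fib_pred hp h
  have hx0 : Nat.fib (t + 1) ≠ 0 := by simp
  have key : Nat.fib ((t + 1) * (j + 2)) = Nat.fib (t + 1) * ((j + 2) * Nat.fib t ^ (j + 1) +
      Nat.fib (t + 1) * ((j + 2).choose 2 * Nat.fib t ^ j + u * Nat.fib (t + 1))) := by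
    rw [hu]; ring
  have hw : ¬ p ∣ (j + 2) * Nat.fib t ^ (j + 1) +
      Nat.fib (t + 1) * ((j + 2).choose 2 * Nat.fib t ^ j + u * Nat.fib (t + 1)) := by
    rw [← Nat.dvd_add_iff_left (h.mul_right _), hp.dvd_mul]
    exact fun h => h.elim hk fun h => hy (hp.dvd_of_dvd_pow h)
  have hw0 : (j + 2) * Nat.fib t ^ (j + 1) +
      Nat.fib (t + 1) * ((j + 2).choose 2 * Nat.fib t ^ j + u * Nat.fib (t + 1)) ≠ 0 := by
    intro h0; exact hw (h0 ▸ dvd_zero p)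
  rw [key, padicValNat.mul hx0 hw0, padicValNat.eq_zero_of_not_dvd hw, add_zero]

theorem padicValNat_fib_mul {p m k : ℕ} (hp : p.Prime) (hp2 : p ≠ 2) (hm : 0 < m)
    (h : p ∣ Nat.fib m) (hk : k ≠ 0) :
    padicValNat p (Nat.fib (m * k)) = padicValNat p (Nat.fib m) + padicValNat p k := by
  have := Fact.mk hp
  induction k using Nat.strong_induction_on with
  | _ k ih =>
    by_cases hd : p ∣ k
    · obtain ⟨c, rfl⟩ := hd
      have hc : c ≠ 0 := by rintro rfl; simp at hk
      have hlt : c < p * c := by nlinarith [hp.two_le, Nat.pos_of_ne_zero hc]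
      rw [mul_comm p c, ← mul_assoc, padicValNat_fib_mul_prime hp hp2
        (Nat.mul_pos hm (Nat.pos_of_ne_zero hc)) (h.trans (Nat.fib_dvd _ _ (dvd_mul_right m c))),
        ih c hlt hc, padicValNat.mul hc hp.ne_zero, padicValNat.self hp.one_lt, add_assoc]
    · rw [padicValNat_fib_mul_of_not_dvd hp hm h hd, padicValNat.eq_zero_of_not_dvd hd, add_zero]

/-! ### The rank of appearance divides `p + 1` -/

/-- If `5` is a non-residue, then `(2w - 1)² = 5` and Frobenius give `w^p = 1 - w`, whence
`w^(p+1) = -1`; the factor `2` avoids inverting `2` in `K`. -/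
theorem golden_pow_prime_succ {K : Type*} [CommRing K] {p : ℕ} [Fact p.Prime] [CharP K p]
    (hp2 : p ≠ 2) (h5 : (5 : K) ^ (p / 2) = -1) {w : K} (hw : w * w = w + 1) :
    2 * w ^ (p + 1) = -2 := by
  have hodd : 2 * (p / 2) + 1 = p := by
    have := (Fact.out : p.Prime).eq_two_or_odd; omega
  have hd : (2 * w - 1) ^ (2 * (p / 2) + 1) = -(2 * w - 1) := by
    have hsq : (2 * w - 1) ^ 2 = 5 := by linear_combination 4 * hw
    rw [pow_succ, pow_mul, hsq, h5, neg_one_mul]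
  have h2p : (2 : K) ^ p = 2 := by
    rw [← one_add_one_eq_two, add_pow_char, one_pow]
  rw [hodd, sub_pow_char, mul_pow, one_pow, h2p] at hd
  rw [pow_succ]
  linear_combination w * hd - 2 * hw

theorem golden_pow {K : Type*} [CommRing K] {w : K} (hw : w * w = w + 1) (n : ℕ) :
    w ^ (n + 1) = (Nat.fib (n + 1) : K) * w + (Nat.fib n : K) := by
  induction n with
  | zero => simp
  | succ n ih =>
    rw [pow_succ, ih, Nat.fib_add_two]
    push_cast
    linear_combination (Nat.fib (n + 1) : K) * hw

theorem two_three_not_isSquare_zmod_five :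
    ¬ IsSquare ((2 : ℕ) : ZMod 5) ∧ ¬ IsSquare ((3 : ℕ) : ZMod 5) := by
  decide

theorem five_pow_half {p : ℕ} [Fact p.Prime] (hp2 : p ≠ 2) (hmod : p % 5 = 2 ∨ p % 5 = 3) :
    (5 : ZMod p) ^ (p / 2) = -1 := by
  have hp : p.Prime := Fact.out
  have : Fact (Nat.Prime 5) := ⟨by norm_num⟩
  have h50 : (5 : ZMod p) ≠ 0 := by
    intro h
    have h5 : p ∣ 5 := (ZMod.natCast_eq_zero_iff 5 p).1 (by exact_mod_cast h)
    have := (Nat.prime_dvd_prime_iff_eq hp (by norm_num)).1 h5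
    omega
  refine (ZMod.pow_div_two_eq_neg_one_or_one p h50).resolve_left fun h => ?_
  have hs := (ZMod.exists_sq_eq_prime_iff_of_mod_four_eq_one (p := 5) (q := p)
    (by norm_num) hp2).2 (by exact_mod_cast (ZMod.euler_criterion p h50).2 h)
  rw [← ZMod.natCast_mod p 5] at hs
  rcases hmod with h | h <;> rw [h] at hs
  exacts [two_three_not_isSquare_zmod_five.1 hs, two_three_not_isSquare_zmod_five.2 hs]

open QuadraticAlgebra in
/-- Compare coefficients of `ω` in `ω^(p+1) = F_{p+1} ω + F_p = -1`, in the ring `𝔽_p[ω]` with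
`ω² = ω + 1`. -/
theorem prime_dvd_fib_succ {p : ℕ} (hp : p.Prime) (hp2 : p ≠ 2)
    (hmod : p % 5 = 2 ∨ p % 5 = 3) : p ∣ Nat.fib (p + 1) := by
  have := Fact.mk hp
  have h20 : (2 : ZMod p) ≠ 0 := by
    intro h
    have h2 : p ∣ 2 := (ZMod.natCast_eq_zero_iff 2 p).1 (by exact_mod_cast h)
    exact hp2 ((Nat.prime_dvd_prime_iff_eq hp (by norm_num)).1 h2)
  have : CharP (QuadraticAlgebra (ZMod p) 1 1) p :=
    charP_of_injective_algebraMap algebraMap_injective p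
  have h5 : (5 : QuadraticAlgebra (ZMod p) 1 1) ^ (p / 2) = -1 := by
    have := congrArg (algebraMap (ZMod p) (QuadraticAlgebra (ZMod p) 1 1)) (five_pow_half hp2 hmod)
    rwa [map_pow, map_neg, map_one, map_ofNat] at this
  have hw : (ω : QuadraticAlgebra (ZMod p) 1 1) * ω = ω + 1 := by
    ext <;> simp
  have h := golden_pow_prime_succ hp2 h5 hw
  rw [golden_pow hw] at h
  have him := congrArg QuadraticAlgebra.im h
  have hcast (n : ℕ) : ((n : ℕ) : QuadraticAlgebra (ZMod p) 1 1) = algebraMap (ZMod p) _ n := by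
    simp
  have h2' : (2 : QuadraticAlgebra (ZMod p) 1 1) = algebraMap (ZMod p) _ 2 := by rw [map_ofNat]
  rw [hcast, hcast, h2', ← map_neg] at him
  simp only [im_mul, re_mul, re_add, im_add, algebraMap_re, algebraMap_im, omega_re,
    omega_im] at him
  simp [h20] at him
  exact (ZMod.natCast_eq_zero_iff _ _).1 (by exact_mod_cast him)

/-- A witness `M` is required because `sInf ∅ = 0`. -/
theorem fibRank_spec {p M : ℕ} (hM : 0 < M) (hdvd : p ∣ Nat.fib M) :
    0 < fibRank p ∧ p ∣ Nat.fib (fibRank p) :=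
  Nat.sInf_mem (s := {m : ℕ | 0 < m ∧ p ∣ Nat.fib m}) ⟨M, hM, hdvd⟩

theorem dvd_fib_iff {p M : ℕ} (hM : 0 < M) (hdvd : p ∣ Nat.fib M) (k : ℕ) :
    p ∣ Nat.fib k ↔ fibRank p ∣ k := by
  obtain ⟨hz, hpz⟩ := fibRank_spec hM hdvd
  refine ⟨fun h => ?_, fun h => hpz.trans (Nat.fib_dvd _ _ h)⟩
  have hg : p ∣ Nat.fib (Nat.gcd (fibRank p) k) := by
    rw [Nat.fib_gcd]; exact Nat.dvd_gcd hpz h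
  have hle : fibRank p ≤ Nat.gcd (fibRank p) k :=
    Nat.sInf_le ⟨Nat.gcd_pos_of_pos_left _ hz, hg⟩
  have heq := le_antisymm (Nat.gcd_le_left k hz) hle
  exact heq ▸ Nat.gcd_dvd_right (fibRank p) k

/-! ### Valuations of products of Fibonacci numbers -/

/-- The Fibonacci factorial (fibonorial) `F_1 F_2 ⋯ F_k`. -/
def fibFact (k : ℕ) : ℕ := ∏ i ∈ Finset.range k, Nat.fib (i + 1)

theorem fibFact_succ (k : ℕ) : fibFact (k + 1) = fibFact k * Nat.fib (k + 1) :=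
  Finset.prod_range_succ _ _

theorem fibFact_ne_zero (k : ℕ) : fibFact k ≠ 0 :=
  Finset.prod_ne_zero_iff.2 fun i _ => by simp

/-- Integrality of the Fibonomial coefficients, by the Pascal-type recursion coming from
`F_{j+k} = F_j F_{k-1} + F_{j+1} F_k`. -/
theorem fibFact_mul_dvd (j k : ℕ) : fibFact j * fibFact k ∣ fibFact (j + k) := by
  induction h : j + k generalizing j k with
  | zero => obtain ⟨rfl, rfl⟩ : j = 0 ∧ k = 0 := by omega
            simp [fibFact]
  | succ N ih =>
    rcases j with _ | j
    · obtain rfl : k = N + 1 := by omega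
      simp [fibFact]
    rcases k with _ | k
    · obtain rfl : j = N := by omega
      simp [fibFact]
    have h1 := ih j (k + 1) (by omega)
    have h2 := ih (j + 1) k (by omega)
    have hF : Nat.fib (N + 1) =
        Nat.fib (j + 1) * Nat.fib k + Nat.fib (j + 2) * Nat.fib (k + 1) := by
      rw [← Nat.fib_add (j + 1) k]; congr 1; omega
    rw [fibFact_succ N, hF, mul_add]
    refine dvd_add ?_ ?_
    · rw [fibFact_succ j, ← mul_assoc]
      refine Dvd.dvd.mul_right ?_ _
      rw [mul_right_comm]
      exact mul_dvd_mul_right h1 _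
    · rw [fibFact_succ k, mul_comm (Nat.fib (j + 2)), ← mul_assoc, ← mul_assoc]
      exact (mul_dvd_mul_right h2 _).mul_right _

theorem prod_fib_mul_fibFact (r k : ℕ) :
    (∏ i ∈ Finset.range k, Nat.fib (r + k - i)) * fibFact r = fibFact (r + k) := by
  induction k with
  | zero => simp
  | succ k ih =>
    rw [Finset.prod_range_succ', ← add_assoc, fibFact_succ, ← ih]
    have : ∀ i ∈ Finset.range k, Nat.fib (r + k + 1 - (i + 1)) = Nat.fib (r + k - i) :=
      fun i _ => by congr 1; omega
    rw [Finset.prod_congr rfl this, Nat.sub_zero]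
    ring

/-- The truncating division in `fibBinom` is exact. -/
theorem fibBinom_mul (r k : ℕ) :
    fibBinom (r + k) k * (fibFact k * fibFact r) = fibFact (r + k) := by
  have h : fibFact k ∣ ∏ i ∈ Finset.range k, Nat.fib (r + k - i) := by
    have h := fibFact_mul_dvd k r
    rw [add_comm k r, ← prod_fib_mul_fibFact] at h
    exact Nat.dvd_of_mul_dvd_mul_right (Nat.pos_of_ne_zero (fibFact_ne_zero r)) h
  rw [← mul_assoc, ← prod_fib_mul_fibFact r k]
  congr 1
  exact Nat.div_mul_cancel h

/-- Among `F_1, …, F_k` exactly the terms `F_{zi}` with `i ≤ k/z` are divisible by `p`, and each has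
valuation `ν_p(F_z) + ν_p(i)`. -/
theorem padicValNat_fibFact {p M : ℕ} (hp : p.Prime) (hp2 : p ≠ 2) (hM : 0 < M)
    (hdvd : p ∣ Nat.fib M) (k : ℕ) :
    padicValNat p (fibFact k) = k / fibRank p * padicValNat p (Nat.fib (fibRank p)) +
      padicValNat p (k / fibRank p).factorial := by
  have := Fact.mk hp
  obtain ⟨hz0, hpz⟩ := fibRank_spec hM hdvd
  induction k with
  | zero => simp [fibFact]
  | succ k ih =>
    rw [fibFact_succ, padicValNat.mul (fibFact_ne_zero k) (by simp), ih, Nat.succ_div]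
    split_ifs with h
    · obtain ⟨c, hc⟩ := h
      have hkc : k / fibRank p + 1 = c := by
        have h1 : (k + 1) / fibRank p = _ := Nat.succ_div
        rw [if_pos ⟨c, hc⟩, hc, Nat.mul_div_cancel_left _ hz0] at h1
        exact h1.symm
      have hc0 : c ≠ 0 := hkc ▸ Nat.succ_ne_zero _
      rw [hc, padicValNat_fib_mul hp hp2 hz0 hpz hc0, Nat.factorial_succ,
        padicValNat.mul (Nat.succ_ne_zero _) (Nat.factorial_ne_zero _), hkc]
      rw [← hkc]; ring
    · rw [padicValNat.eq_zero_of_not_dvd fun hd => h ((dvd_fib_iff hM hdvd _).1 hd)]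
      simp

/-! ### Digit sums -/

theorem digitSum_mul_add {p : ℕ} (hp : 1 < p) (x : ℕ) {d : ℕ} (hd : d < p) :
    digitSum p (p * x + d) = digitSum p x + d := by
  unfold digitSum
  by_cases h : x = 0 ∧ d = 0
  · obtain ⟨rfl, rfl⟩ := h; simp
  · rw [add_comm, Nat.digits_add p hp d x hd (by omega), List.sum_cons, add_comm]

/-- Adding `r < p^a` to a multiple of `p^a` causes no carries. -/
theorem digitSum_pow_mul_add {p : ℕ} (hp : 1 < p) (q : ℕ) (a r : ℕ) (hr : r < p ^ a) :
    digitSum p (p ^ a * q + r) = digitSum p q + digitSum p r := by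
  induction a generalizing r with
  | zero =>
    obtain rfl : r = 0 := by simpa using hr
    simp [digitSum]
  | succ a ih =>
    have hd := Nat.mod_lt r (show 0 < p by omega)
    have hr' : r / p < p ^ a := Nat.div_lt_of_lt_mul (by rwa [pow_succ'] at hr)
    have e1 : p ^ (a + 1) * q + r = p * (p ^ a * q + r / p) + r % p := by
      conv_lhs => rw [← Nat.div_add_mod r p]
      ring
    have e2 : digitSum p r = digitSum p (r / p) + r % p := by
      conv_lhs => rw [← Nat.div_add_mod r p]
      exact digitSum_mul_add hp _ hd
    rw [e1, digitSum_mul_add hp _ hd, ih _ hr', e2, add_assoc]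

theorem digitSum_pow_mul {p : ℕ} (hp : 1 < p) (q a : ℕ) :
    digitSum p (p ^ a * q) = digitSum p q := by
  simpa [digitSum] using digitSum_pow_mul_add hp q a 0 (by positivity)

/-- The number `1 + p² + p⁴ + ⋯ + p^(2(b-1)) = (p^(2b) - 1) / (p² - 1)`. -/
def geomSq (p b : ℕ) : ℕ := ∑ i ∈ Finset.range b, (p ^ 2) ^ i

/-- `(p² - 1) G + 1 = p^(2b)` with `p = P + 1`, so that `p² - 1 = P (P + 2)`. -/
theorem geomSq_spec {P : ℕ} (b : ℕ) :
    P * (P + 2) * geomSq (P + 1) b + 1 = (P + 1) ^ (2 * b) := by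
  rw [pow_mul]
  induction b with
  | zero => simp [geomSq]
  | succ b ih =>
    rw [pow_succ, ← ih]
    have : geomSq (P + 1) (b + 1) = geomSq (P + 1) b + ((P + 1) ^ 2) ^ b :=
      Finset.sum_range_succ _ _
    rw [this, ← ih]; ring

theorem geomSq_succ (p b : ℕ) : geomSq p (b + 1) = p ^ 2 * geomSq p b + 1 := by
  unfold geomSq
  rw [Finset.sum_range_succ', Finset.mul_sum]
  simp [pow_succ']

/-- The number `u (p - 1) (1 + p² + ⋯ + p^(2(b-1)))`, with `p = P + 1` and `1 ≤ u ≤ p`,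
consists in base `p` of `b` blocks with the digits `u - 1` and `p - u`. -/
theorem digitSum_geomSq {P u : ℕ} (hP : 0 < P) (hu0 : 0 < u) (hu : u ≤ P + 1) (b : ℕ) :
    digitSum (P + 1) (u * P * geomSq (P + 1) b) = b * P := by
  induction b with
  | zero => simp [geomSq, digitSum]
  | succ b ih =>
    obtain ⟨v, rfl⟩ : ∃ v, u = v + 1 := ⟨u - 1, by omega⟩
    obtain ⟨x, rfl⟩ : ∃ x, P = v + x := ⟨P - v, by omega⟩
    have e : (v + 1) * (v + x) * geomSq (v + x + 1) (b + 1) =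
        (v + x + 1) * ((v + x + 1) * ((v + 1) * (v + x) * geomSq (v + x + 1) b) + v) + x := by
      rw [geomSq_succ]; ring
    rw [e, digitSum_mul_add (by omega) _ (by omega), digitSum_mul_add (by omega) _ (by omega), ih]
    ring

/-- Legendre's formula in additive form. -/
theorem mul_padicValNat_factorial {p : ℕ} (hp : p.Prime) (n : ℕ) :
    (p - 1) * padicValNat p n.factorial + digitSum p n = n := by
  have := Fact.mk hp
  have h := sub_one_mul_padicValNat_factorial (p := p) n
  have hle := Nat.digit_sum_le p n
  unfold digitSum
  omega

/-! ### The valuation of the Fibonomial coefficient -/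

theorem fibonomial_p_adic_valuation_pm_two_a_even
    (p a n : ℕ) (hp : p.Prime) (hp2 : p ≠ 2) (hp5 : p ≠ 5)
    (ha : 0 < a) (hn : 0 < n) (haeven : Even a)
    (hmod : p % 5 = 2 ∨ p % 5 = 3)
    (s A : ℕ)
    (hs : s = n % fibRank p)
    (hA : A = n * (p ^ a - 1) / (p ^ padicValNat p n * fibRank p)) :
    (padicValNat p (fibBinom (p ^ a * n) n) : ℚ)
        = A / (p - 1) - (a / 2 : ℚ) * (if s ≠ 0 then 1 else 0)
          - padicValNat p (Nat.factorial A) ∧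
    (padicValNat p (fibBinom (p ^ a * n) n) : ℚ)
        = digitSum p A / (p - 1) - (a / 2 : ℚ) * (if s ≠ 0 then 1 else 0) := by
  have := Fact.mk hp
  have hM := prime_dvd_fib_succ hp hp2 hmod
  obtain ⟨hz0, hpz⟩ := fibRank_spec p.succ_pos hM
  obtain ⟨d, hd⟩ := (dvd_fib_iff p.succ_pos hM _).1 hM
  have hval := padicValNat_fibFact hp hp2 p.succ_pos hM
  generalize fibRank p = z at *
  obtain ⟨b, rfl⟩ := haeven.two_dvd
  obtain ⟨P, rfl⟩ : ∃ P, p = P + 1 := ⟨p - 1, by have := hp.one_lt; omega⟩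
  have hP : 0 < P := by have := hp.one_lt; omega
  have hG := geomSq_spec (P := P) b
  generalize hg : geomSq (P + 1) b = G at *
  obtain ⟨n', hn'⟩ : (P + 1) ^ padicValNat (P + 1) n ∣ n := pow_padicValNat_dvd
  generalize padicValNat (P + 1) n = v at *
  -- With `p + 1 = z d`, the quotient `(p^a - 1)/z` is `d (p - 1) G`.
  have hpa : (P + 1) ^ (2 * b) = z * (d * P * G) + 1 := by
    rw [← hG, show P + 2 = z * d by omega]; ring
  have hA' : A = n' * (d * P * G) := by
    rw [hA, hn', hpa, Nat.add_sub_cancel]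
    rw [show (P + 1) ^ v * n' * (z * (d * P * G)) = ((P + 1) ^ v * z) * (n' * (d * P * G)) by ring]
    exact Nat.mul_div_cancel_left _ (by positivity)
  have hB : n * (d * P * G) = (P + 1) ^ v * A := by
    rw [hA']; conv_lhs => rw [hn']
    ring
  have hm : (P + 1) ^ (2 * b) * n = z * ((P + 1) ^ v * A) + n := by
    rw [hpa, ← hB]; ring
  have hsz : s < z := hs ▸ Nat.mod_lt _ hz0
  have hnq : z * (n / z) + s = n := hs ▸ Nat.div_add_mod n z
  -- Euclidean decomposition of `B + q` modulo `p^a`, the remainder bound being `hr`.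
  have hq : (P + 1) ^ v * A + n / z = (P + 1) ^ (2 * b) * (n / z) + s * d * P * G := by
    rw [← hB, hpa]
    generalize n / z = q at *
    rw [← hnq]; ring
  have hsd : s * d ≤ P + 1 := by
    have : s * d < z * d := Nat.mul_lt_mul_of_pos_right hsz
      (Nat.pos_of_ne_zero (by rintro rfl; simp at hd))
    omega
  have hr : s * d * P * G < (P + 1) ^ (2 * b) := by
    rw [← hG]
    have : s * d * (P * G) ≤ (P + 2) * (P * G) := Nat.mul_le_mul_right _ (by omega)
    nlinarith
  have hds : digitSum (P + 1) (s * d * P * G) = if s ≠ 0 then b * P else 0 := by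
    split_ifs with h
    · have : 0 < d := Nat.pos_of_ne_zero (by rintro rfl; simp at hd)
      rw [← hg]
      exact digitSum_geomSq hP (Nat.mul_pos (Nat.pos_of_ne_zero h) this) hsd b
    · obtain rfl : s = 0 := by simpa using h
      simp [digitSum]
  have hbin := congrArg (padicValNat (P + 1)) (fibBinom_mul (z * ((P + 1) ^ v * A)) n)
  have hb0 : fibBinom (z * ((P + 1) ^ v * A) + n) n ≠ 0 := fun h0 =>
    fibFact_ne_zero _ ((fibBinom_mul _ n).symm.trans (by rw [h0, zero_mul]))
  rw [padicValNat.mul hb0 (mul_ne_zero (fibFact_ne_zero _) (fibFact_ne_zero _)),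
    padicValNat.mul (fibFact_ne_zero _) (fibFact_ne_zero _), hval, hval, hval,
    Nat.mul_add_div hz0, Nat.mul_div_cancel_left _ hz0, ← hm] at hbin
  have hL1 := mul_padicValNat_factorial hp (n / z)
  have hL2 := mul_padicValNat_factorial hp ((P + 1) ^ v * A)
  have hL3 := mul_padicValNat_factorial hp ((P + 1) ^ v * A + n / z)
  have hL4 := mul_padicValNat_factorial hp A
  rw [digitSum_pow_mul hp.one_lt] at hL2
  -- Only the digit sum is rewritten; the factorial and the right-hand side keep `B + q`.
  nth_rewrite 2 [hq] at hL3
  rw [digitSum_pow_mul_add hp.one_lt _ _ _ hr, hds] at hL3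
  have key : P * padicValNat (P + 1) (fibBinom ((P + 1) ^ (2 * b) * n) n) +
      (if s ≠ 0 then b * P else 0) = digitSum (P + 1) A := by
    rw [Nat.add_sub_cancel] at hL1 hL2 hL3
    have := congrArg (P * ·) hbin
    linarith
  have hPQ : (P : ℚ) ≠ 0 := by positivity
  have keyQ : (P : ℚ) * padicValNat (P + 1) (fibBinom ((P + 1) ^ (2 * b) * n) n) +
      b * P * (if s ≠ 0 then 1 else 0) = digitSum (P + 1) A := by
    rw [← key]; split_ifs <;> push_cast <;> ring
  have hLQ : (P : ℚ) * padicValNat (P + 1) A.factorial + digitSum (P + 1) A = A := by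
    exact_mod_cast hL4
  push_cast
  rw [add_sub_cancel_right]
  constructor
  · rw [← hLQ, ← keyQ]; field_simp; ring
  · rw [← keyQ]; field_simp; ring
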